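/- Let Q be a commutative, integral quantale and let f : (X,α) → (Y,β) be a fully faithful Q-functor between symmetric Q-categories that is essential. Then the map g sending λ : Y → Q to g λ := fun x => ⨆ y, (λ y * β (f x) y) restricts to a bijection from T Y onto T X that is an isomorphism of symmetric Q-categories: g λ ∈ T X for every λ ∈ T Y, g : T Y → T X is bijective, and σ_X (g λ) (g λ') = σ_Y λ λ' for all λ, λ' ∈ T Y. -/

import Mathlib

/-!
By integrality every weight `δ : Y → Q` with `β y y' * δ y' ≤ δ y` gives a symmetric Q-category
structure `γ y y' = β y y' ⊔ δ y * δ y'` on `Y` lying above `β`. If moreover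
`δ (f x) * δ (f x') ≤ α x x'`, then `γ` still restricts to `α` along `f`, so essentiality forces
`γ = β`, that is, `δ y * δ y' ≤ β y y'` (`essential_weight_mul_le`).

Members of the tight span are the `lam` with `lam y' * lam y ≤ β y y'` that are pointwise largest
with this property. For such `lam` the map of the theorem is just restriction along `f`
(`iSup_mul_eq_of_mem`).

* Restriction lands in `tightSpan α`: if `p * lam (f x) ≤ α x₀ x` for all `x`, apply the key lemma
  to `δ y = lam y ⊔ p * β y (f x₀)`; maximality of `lam` gives `δ ≤ lam`, hence
  `p ≤ lam (f x₀)`.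
* The inverse sends `μ` to its largest extension `y ↦ ⨅ x, μ x ⇨ β y (f x)`, which the key lemma
  shows to be in `tightSpan β`.
* Homs agree because the hom of the tight span of `α` is symmetric.
-/

universe u v

/-- The residuation `p ⇨ r` of a quantale, right adjoint to multiplication:
`p * q ≤ r ↔ q ≤ qimp p r`. -/
def qimp {Q : Type*} [CompleteLattice Q] [Mul Q] (p r : Q) : Q :=
  sSup {q | p * q ≤ r}

/-- The tight span of a symmetric Q-category `(X, α)`. -/
def tightSpan {Q X : Type*} [CompleteLattice Q] [Mul Q] (α : X → X → Q) :
    Set (X → Q) :=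
  {μ | ∀ x, μ x = ⨅ y, qimp (μ y) (α x y)}

/-- The hom of the tight span: `σ μ λ = ⨅ x, (μ x ⇨ λ x)`. -/
def tsHom {Q X : Type*} [CompleteLattice Q] [Mul Q] (μ lam : X → Q) : Q :=
  ⨅ x, qimp (μ x) (lam x)

section TightSpan

variable {Q : Type*} [CompleteLattice Q] [CommMonoid Q] [IsQuantale Q]

theorem le_qimp_iff {p q r : Q} : q ≤ qimp p r ↔ p * q ≤ r :=
  Quantale.rightMulResiduation_le_iff_mul_le

theorem le_tsHom_iff {X : Type*} {μ lam : X → Q} {t : Q} :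
    t ≤ tsHom μ lam ↔ ∀ x, μ x * t ≤ lam x := by
  simp only [tsHom, le_iInf_iff, le_qimp_iff]

theorem mem_tightSpan_iff {Y : Type*} {β : Y → Y → Q} {lam : Y → Q} :
    lam ∈ tightSpan β ↔ (∀ y y', lam y' * lam y ≤ β y y') ∧
      ∀ y q, (∀ y', lam y' * q ≤ β y y') → q ≤ lam y := by
  constructor
  · intro h
    have key : ∀ y q, q ≤ lam y ↔ ∀ y', lam y' * q ≤ β y y' := fun y q => by
      rw [h y]
      simp only [le_iInf_iff, le_qimp_iff]
    exact ⟨fun y => (key y _).1 le_rfl, fun y q => (key y q).2⟩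
  · rintro ⟨h1, h2⟩ y
    apply le_antisymm
    · simpa only [le_iInf_iff, le_qimp_iff] using h1 y
    · exact h2 y _ fun y' => le_qimp_iff.1 (iInf_le _ y')

/-- Tight functions are Q-functorial weights; this follows from their maximality. -/
theorem mul_le_of_mem_tightSpan {Y : Type*} {β : Y → Y → Q}
    (hβtrans : ∀ x y z, β y z * β x y ≤ β x z) {lam : Y → Q} (h : lam ∈ tightSpan β) (y y' : Y) :
    β y y' * lam y' ≤ lam y := by
  obtain ⟨h1, h2⟩ := mem_tightSpan_iff.1 h
  refine h2 _ _ fun z => ?_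
  calc lam z * (β y y' * lam y') = lam z * lam y' * β y y' := by ac_rfl
    _ ≤ β y' z * β y y' := by gcongr; exact h1 _ _
    _ ≤ β y z := hβtrans _ _ _

/-- On tight functions the map of the theorem is evaluation along `f`: the supremum over `y'` is
attained at `y' = y`. -/
theorem iSup_mul_eq_of_mem {Y : Type*} {β : Y → Y → Q} (hβ1 : ∀ y, β y y = 1)
    (hβtrans : ∀ x y z, β y z * β x y ≤ β x z) {lam : Y → Q} (h : lam ∈ tightSpan β) (y : Y) :
    ⨆ y', lam y' * β y y' = lam y := by
  apply le_antisymm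
  · refine iSup_le fun y' => ?_
    rw [mul_comm]
    exact mul_le_of_mem_tightSpan hβtrans h y y'
  · refine le_iSup_of_le y ?_
    rw [hβ1, mul_one]

end TightSpan

section Essential

variable {Q : Type v} [CompleteLattice Q] [CommMonoid Q] [IsQuantale Q]

/-- The only place where essentiality is used: it is applied to the identity of `Y`, with
codomain structure `γ y y' = β y y' ⊔ δ y * δ y'` (the carrier is lifted to the universe in which
essentiality is tested). -/
theorem essential_weight_mul_le (hint : (⊤ : Q) = 1) {X Y : Type u} {α : X → X → Q}
    {β : Y → Y → Q} (hβ1 : ∀ y, β y y = 1) (hβsym : ∀ y y', β y y' = β y' y)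
    (hβtrans : ∀ x y z, β y z * β x y ≤ β x z) {f : X → Y}
    (hff : ∀ x x', β (f x) (f x') = α x x')
    (hess : ∀ (Z : Type (max u v)) (γ : Z → Z → Q),
      (∀ z, γ z z = 1) → (∀ z z', γ z z' = γ z' z) →
      (∀ x y z, γ y z * γ x y ≤ γ x z) →
      ∀ g : Y → Z, (∀ y y', β y y' ≤ γ (g y) (g y')) →
      (∀ x x', γ (g (f x)) (g (f x')) = α x x') →
      (∀ y y', γ (g y) (g y') = β y y'))
    {δ : Y → Q} (hδ : ∀ y y', β y y' * δ y' ≤ δ y)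
    (hδf : ∀ x x', δ (f x) * δ (f x') ≤ α x x') (y y' : Y) : δ y * δ y' ≤ β y y' := by
  have le_one : ∀ q : Q, q ≤ 1 := fun q => hint ▸ le_top
  have h := hess (ULift.{v} Y) (fun a b => β a.down b.down ⊔ δ a.down * δ b.down)
    (fun z => by rw [hβ1]; exact sup_eq_left.2 (le_one _))
    (fun z z' => by rw [hβsym, mul_comm])
    (fun a b c => by
      simp only [Quantale.mul_sup_distrib, Quantale.sup_mul_distrib]
      refine sup_le (sup_le ?_ ?_) (sup_le ?_ ?_)
      · exact le_sup_of_le_left (hβtrans _ _ _)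
      · refine le_sup_of_le_right ?_
        calc δ b.down * δ c.down * β a.down b.down
            = (β a.down b.down * δ b.down) * δ c.down := by ac_rfl
          _ ≤ δ a.down * δ c.down := by gcongr; exact hδ _ _
      · refine le_sup_of_le_right ?_
        calc β b.down c.down * (δ a.down * δ b.down)
            = δ a.down * (β c.down b.down * δ b.down) := by
              rw [hβsym c.down b.down]; ac_rfl
          _ ≤ δ a.down * δ c.down := by gcongr; exact hδ _ _
      · refine le_sup_of_le_right ?_
        calc δ b.down * δ c.down * (δ a.down * δ b.down)
            = δ a.down * δ c.down * (δ b.down * δ b.down) := by ac_rfl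
          _ ≤ δ a.down * δ c.down * 1 := by gcongr; exact le_one _
          _ = δ a.down * δ c.down := mul_one _)
    ULift.up (fun _ _ => le_sup_left)
    (fun x x' => by rw [hff]; exact sup_eq_left.2 (hδf x x')) y y'
  exact h ▸ le_sup_right

end Essential

/-- an essential embedding induces an isomorphism of tight spans. -/
theorem essential_tightSpan_iso
    {Q : Type v} [CompleteLattice Q] [CommMonoid Q] [IsQuantale Q]
    (hint : (⊤ : Q) = 1)
    {X Y : Type u} (α : X → X → Q) (β : Y → Y → Q)
    (hα1 : ∀ x, α x x = 1)
    (hαsym : ∀ x y, α x y = α y x)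
    (hαtrans : ∀ x y z, α y z * α x y ≤ α x z)
    (hβ1 : ∀ y, β y y = 1)
    (hβsym : ∀ y y', β y y' = β y' y)
    (hβtrans : ∀ x y z, β y z * β x y ≤ β x z)
    (f : X → Y)
    (hff : ∀ x x', β (f x) (f x') = α x x')
    (hess : ∀ (Z : Type (max u v)) (γ : Z → Z → Q),
      (∀ z, γ z z = 1) → (∀ z z', γ z z' = γ z' z) →
      (∀ x y z, γ y z * γ x y ≤ γ x z) →
      ∀ g : Y → Z, (∀ y y', β y y' ≤ γ (g y) (g y')) →
      (∀ x x', γ (g (f x)) (g (f x')) = α x x') →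
      (∀ y y', γ (g y) (g y') = β y y')) :
    (∀ lam ∈ tightSpan β, (fun x => ⨆ y, lam y * β (f x) y) ∈ tightSpan α) ∧
    Set.BijOn (fun (lam : Y → Q) (x : X) => ⨆ y, lam y * β (f x) y)
      (tightSpan β) (tightSpan α) ∧
    (∀ lam ∈ tightSpan β, ∀ lam' ∈ tightSpan β,
      tsHom (fun x => ⨆ y, lam y * β (f x) y) (fun x => ⨆ y, lam' y * β (f x) y)
        = tsHom lam lam') := by
  have K : ∀ δ : Y → Q, (∀ y y', β y y' * δ y' ≤ δ y) →
      (∀ x x', δ (f x) * δ (f x') ≤ α x x') → ∀ y y', δ y * δ y' ≤ β y y' :=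
    fun δ hδ hδf => essential_weight_mul_le hint hβ1 hβsym hβtrans hff hess hδ hδf
  have le_one : ∀ q : Q, q ≤ 1 := fun q => hint ▸ le_top
  have hg : ∀ lam ∈ tightSpan β, (fun x => ⨆ y, lam y * β (f x) y) = fun x => lam (f x) :=
    fun lam h => funext fun x => iSup_mul_eq_of_mem hβ1 hβtrans h (f x)
  have hmem : ∀ lam ∈ tightSpan β, (fun x => lam (f x)) ∈ tightSpan α := by
    intro lam h
    obtain ⟨h1, h2⟩ := mem_tightSpan_iff.1 h
    refine mem_tightSpan_iff.2 ⟨fun x x' => hff x x' ▸ h1 _ _, fun x₀ p hp => ?_⟩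
    have hmix : ∀ x x', lam (f x) * (p * β (f x') (f x₀)) ≤ α x' x := fun x x' =>
      calc lam (f x) * (p * β (f x') (f x₀)) = lam (f x) * p * α x' x₀ := by rw [hff]; ac_rfl
        _ ≤ α x₀ x * α x' x₀ := by gcongr; exact hp x
        _ ≤ α x' x := hαtrans _ _ _
    have hδ := K (fun y => lam y ⊔ p * β y (f x₀))
      (fun y y' => by
        simp only [Quantale.mul_sup_distrib]
        refine sup_le_sup (mul_le_of_mem_tightSpan hβtrans h y y') ?_
        calc β y y' * (p * β y' (f x₀)) = p * (β y' (f x₀) * β y y') := by ac_rfl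
          _ ≤ p * β y (f x₀) := by gcongr; exact hβtrans _ _ _)
      (fun x x' => by
        simp only [Quantale.mul_sup_distrib, Quantale.sup_mul_distrib]
        refine sup_le (sup_le ?_ ?_) (sup_le ?_ ?_)
        · rw [hαsym, ← hff]; exact h1 _ _
        · rw [mul_comm]; exact hmix _ _
        · rw [hαsym]; exact hmix _ _
        · calc p * β (f x) (f x₀) * (p * β (f x') (f x₀))
              = p * p * (α x₀ x' * α x x₀) := by
                rw [hff, hff, hαsym x' x₀]; ac_rfl
            _ ≤ 1 * α x x' := by gcongr; exacts [le_one _, hαtrans _ _ _]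
            _ = α x x' := one_mul _)
    refine h2 _ _ fun y' => ?_
    calc lam y' * p
        ≤ (lam y' ⊔ p * β y' (f x₀)) * (lam (f x₀) ⊔ p * β (f x₀) (f x₀)) := by
          gcongr
          · exact le_sup_left
          · rw [hβ1, mul_one]; exact le_sup_right
      _ ≤ β y' (f x₀) := hδ _ _
      _ = _ := hβsym _ _
  -- The largest extension of a tight `μ` along `f` is tight and restricts to `μ`.
  have hext : ∀ μ ∈ tightSpan α, ∃ δ ∈ tightSpan β, (∀ x, δ (f x) = μ x) ∧
      ∀ y q, (∀ x, μ x * q ≤ β y (f x)) → q ≤ δ y := by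
    intro μ h
    obtain ⟨h1, h2⟩ := mem_tightSpan_iff.1 h
    obtain ⟨δ, hδ⟩ : ∃ δ : Y → Q, ∀ y q, q ≤ δ y ↔ ∀ x, μ x * q ≤ β y (f x) :=
      ⟨fun y => ⨅ x, qimp (μ x) (β y (f x)), fun y q => by
        simp only [le_iInf_iff, le_qimp_iff]⟩
    have hδf : ∀ x, δ (f x) = μ x := fun x => by
      apply le_antisymm
      · refine h2 _ _ fun x' => ?_
        rw [← hff]
        exact (hδ _ _).1 le_rfl x'
      · refine (hδ _ _).2 fun x' => ?_
        rw [hff]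
        exact h1 _ _
    have hδδ := K δ
      (fun y y' => (hδ _ _).2 fun x =>
        calc μ x * (β y y' * δ y') = μ x * δ y' * β y y' := by ac_rfl
          _ ≤ β y' (f x) * β y y' := by gcongr; exact (hδ _ _).1 le_rfl x
          _ ≤ β y (f x) := hβtrans _ _ _)
      (fun x x' => by rw [hδf, hδf, mul_comm]; exact h1 _ _)
    refine ⟨δ, mem_tightSpan_iff.2 ⟨fun y y' => mul_comm (δ y) _ ▸ hδδ y y', fun y q hq => ?_⟩,
      hδf, fun y q => (hδ y q).2⟩
    exact (hδ _ _).2 fun x => hδf x ▸ hq (f x)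
  -- A tight function on `Y` is the largest extension of its own restriction.
  have hle : ∀ lam ∈ tightSpan β, ∀ y q, (∀ x, lam (f x) * q ≤ β y (f x)) → q ≤ lam y := by
    intro lam h y q hq
    obtain ⟨h1, h2⟩ := mem_tightSpan_iff.1 h
    obtain ⟨δ, hδ, -, hmax⟩ := hext _ (hmem lam h)
    refine h2 _ _ fun y' => ?_
    calc lam y' * q ≤ δ y' * δ y :=
          mul_le_mul' (hmax _ _ fun x => h1 _ _) (hmax _ _ hq)
      _ ≤ β y y' := (mem_tightSpan_iff.1 hδ).1 _ _
  have hanti : ∀ lam ∈ tightSpan β, ∀ lam' ∈ tightSpan β,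
      (∀ x, lam (f x) = lam' (f x)) → lam ≤ lam' := fun lam h lam' h' heq y =>
    hle lam' h' _ _ fun x => heq x ▸ (mem_tightSpan_iff.1 h).1 _ _
  have hmaps : ∀ lam ∈ tightSpan β, (fun x => ⨆ y, lam y * β (f x) y) ∈ tightSpan α :=
    fun lam h => by rw [hg lam h]; exact hmem lam h
  refine ⟨hmaps, ⟨hmaps, ?_, ?_⟩, ?_⟩
  · intro lam h lam' h' heq
    have heq' : (fun x => lam (f x)) = fun x => lam' (f x) :=
      (hg lam h).symm.trans (Eq.trans heq (hg lam' h'))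
    exact le_antisymm (hanti _ h _ h' fun x => congrFun heq' x)
      (hanti _ h' _ h fun x => (congrFun heq' x).symm)
  · intro μ h
    obtain ⟨δ, hδ, hδf, -⟩ := hext μ h
    exact ⟨δ, hδ, (hg δ hδ).trans (funext hδf)⟩
  · intro lam h lam' h'
    rw [hg lam h, hg lam' h']
    refine eq_of_forall_le_iff fun t => ?_
    simp only [le_tsHom_iff]
    refine ⟨fun ht y => hle lam' h' _ _ fun x => ?_, fun ht x => ht (f x)⟩
    -- The hypothesis on `t` is symmetric in the two restrictions.
    have hsymm : lam' (f x) * t ≤ lam (f x) :=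
      (mem_tightSpan_iff.1 (hmem lam h)).2 x _ fun x' =>
        calc lam (f x') * (lam' (f x) * t) = (lam (f x') * t) * lam' (f x) := by ac_rfl
          _ ≤ lam' (f x') * lam' (f x) := by gcongr; exact ht x'
          _ ≤ α x x' := (mem_tightSpan_iff.1 (hmem lam' h')).1 x x'
    calc lam' (f x) * (lam y * t) = (lam' (f x) * t) * lam y := by ac_rfl
      _ ≤ lam (f x) * lam y := by gcongr
      _ ≤ β y (f x) := (mem_tightSpan_iff.1 h).1 _ _
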